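/- There exists a C^∞ function F : ln Ω → ℝ (the α-order discrete Ricci potential) such that ∂F/∂u_i = K_i − s_α r_i^α for every i = 1,…,N and every u ∈ ln Ω (with r_i = e^{u_i}); consequently the α-flow is the negative gradient flow u̇ = −∇_u F of F. -/

import Mathlib

/-!
The potential is assembled face by face, so the point is to integrate the 1-form
`θ₁ du₁ + θ₂ du₂ + θ₃ du₃` attached to a single triangle with inversive distances `a, b, c ≥ 0`.
It is closed, and the issue is the topology of its domain.

Pass to the coordinates `kᵢ = 1 / rᵢ = exp (-uᵢ)`.  By Heron's formula, 16 times the squared area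
of the triangle is `4 (r₁ r₂ r₃)² Q(k)` with `Q = triQ a b c` a quadratic form, so the strict
triangle inequalities give `Q(k) > 0` (`triQ_pos`).  The set `triDom` of all `k` in the
open positive octant with `Q(k) > 0` is *convex* (`convex_triDom`): it suffices that the polar form
of `Q` is nonnegative on pairs of points of the set.  If `a, b, c ≤ 1` all coefficients of `Q` are
nonnegative.  If, say, `a > 1`, completing the square gives
`(a² - 1) Q = D (k₁² + k₂² + 2 a k₁ k₂) - L²` with `L` linear and `D > 0`, and the claim is a reverse
Cauchy–Schwarz inequality (`triB_nonneg_of_one_lt`).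

On `triDom` the angles are smooth, because `1 - cos² θ₁ = k₁² Q / (X Y)` with `X, Y > 0`, and the
form `-∑ (θᵢ / kᵢ) dkᵢ` is closed: `∂(θ₁ / k₁) / ∂k₂` has an explicit expression symmetric in the two
vertices (`triAng_cross`).  The Poincaré lemma on convex open sets then yields a smooth primitive.
The term `s_α r_i^α` is the gradient of `(2πχ / α) log ∑ exp (α uⱼ)`, or of `(2πχ / N) ∑ uⱼ` when
`α = 0`.
-/

open Real Filter Topology
namespace IDCP

variable {N : ℕ}

/-- The set of edges: 2-element subsets of vertices contained in some face. -/
def edges (Fc : Finset (Finset (Fin N))) : Finset (Finset (Fin N)) :=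
  Fc.biUnion fun f => f.powersetCard 2

/-- `Fc` is the face set of a triangulation of a closed connected surface:
every face has 3 vertices, every edge lies in exactly two faces, and the
1-skeleton is connected. -/
structure IsTriangulation (Fc : Finset (Finset (Fin N))) : Prop where
  card3 : ∀ f ∈ Fc, f.card = 3
  edge2 : ∀ e ∈ edges Fc, (Fc.filter fun f => e ⊆ f).card = 2
  conn : (SimpleGraph.fromRel fun i j => ({i, j} : Finset (Fin N)) ∈ edges Fc).Connected

/-- Euler characteristic χ(M) = N − |E| + |F|. -/
def chi (Fc : Finset (Finset (Fin N))) : ℤ :=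
  (N : ℤ) - ((edges Fc).card : ℤ) + (Fc.card : ℤ)

/-- Edge length l_ij = √(r_i² + r_j² + 2 r_i r_j I_{ij}). -/
noncomputable def len (I : Finset (Fin N) → ℝ) (r : Fin N → ℝ) (i j : Fin N) : ℝ :=
  Real.sqrt (r i ^ 2 + r j ^ 2 + 2 * r i * r j * I {i, j})

/-- The cosine of the inner angle at `i` in triangle `{i,j,k}`. -/
noncomputable def cosAng (I : Finset (Fin N) → ℝ) (r : Fin N → ℝ) (i j k : Fin N) : ℝ :=
  (len I r i j ^ 2 + len I r i k ^ 2 - len I r j k ^ 2) / (2 * len I r i j * len I r i k)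

/-- The auxiliary function Λ. -/
noncomputable def Lam (x : ℝ) : ℝ :=
  if x ≤ -1 then π else if x ≤ 1 then Real.arccos x else 0

/-- Discrete Gaussian curvature K_i = 2π − Σ_{{i,j,k}∈F} θ_i^{jk}.  Every face
containing `i` appears exactly twice (once for each ordering of `j,k`), whence
the factor 1/2. -/
noncomputable def K (Fc : Finset (Finset (Fin N))) (I : Finset (Fin N) → ℝ)
    (r : Fin N → ℝ) (i : Fin N) : ℝ :=
  2 * π - (1 / 2) * ∑ j, ∑ k,
    (if ({i, j, k} : Finset (Fin N)) ∈ Fc then Real.arccos (cosAng I r i j k) else 0)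

/-- Extended curvature K̃_i = 2π − Σ θ̃_i^{jk}, using the generalized angles Λ. -/
noncomputable def Kt (Fc : Finset (Finset (Fin N))) (I : Finset (Fin N) → ℝ)
    (r : Fin N → ℝ) (i : Fin N) : ℝ :=
  2 * π - (1 / 2) * ∑ j, ∑ k,
    (if ({i, j, k} : Finset (Fin N)) ∈ Fc then Lam (cosAng I r i j k) else 0)

/-- The set Ω of inversive distance circle packing metrics. -/
def Omega (Fc : Finset (Finset (Fin N))) (I : Finset (Fin N) → ℝ) : Set (Fin N → ℝ) :=
  {r | (∀ i, 0 < r i) ∧ ∀ i j k : Fin N, ({i, j, k} : Finset (Fin N)) ∈ Fc →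
    len I r j k < len I r i j + len I r i k}

/-- s_α = 2πχ(M)/‖r‖_α^α. -/
noncomputable def sA (Fc : Finset (Finset (Fin N))) (α : ℝ) (r : Fin N → ℝ) : ℝ :=
  2 * π * (chi Fc : ℝ) / ∑ j, r j ^ α

/-- Back from u-coordinates: r_i = e^{u_i}. -/
noncomputable def rOf (u : Fin N → ℝ) : Fin N → ℝ := fun i => Real.exp (u i)

/-- ln Ω, the image of Ω under the coordinate change r ↦ u, u_i = ln r_i. -/
def lnOmega (Fc : Finset (Finset (Fin N))) (I : Finset (Fin N) → ℝ) : Set (Fin N → ℝ) :=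
  {u | rOf u ∈ Omega Fc I}

/-- `u` solves the α-flow du_i/dt = s_α r_i^α − K_i on the time set `D`,
staying in ln Ω. -/
def IsFlowSol (Fc : Finset (Finset (Fin N))) (I : Finset (Fin N) → ℝ) (α : ℝ)
    (D : Set ℝ) (u : ℝ → Fin N → ℝ) : Prop :=
  ∀ t ∈ D, rOf (u t) ∈ Omega Fc I ∧
    ∀ i, HasDerivWithinAt (fun s => u s i)
      (sA Fc α (rOf (u t)) * rOf (u t) i ^ α - K Fc I (rOf (u t)) i) D t

/-- `u` solves the extended α-flow du_i/dt = s_α r_i^α − K̃_i on the time set `D`. -/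
def IsExtFlowSol (Fc : Finset (Finset (Fin N))) (I : Finset (Fin N) → ℝ) (α : ℝ)
    (D : Set ℝ) (u : ℝ → Fin N → ℝ) : Prop :=
  ∀ t ∈ D, ∀ i, HasDerivWithinAt (fun s => u s i)
      (sA Fc α (rOf (u t)) * rOf (u t) i ^ α - Kt Fc I (rOf (u t)) i) D t

/-- Lk(A): pairs (e,v) with both endpoints of e outside A, v ∈ A, and e,v spanning a face. -/
def Lk (Fc : Finset (Finset (Fin N))) (A : Finset (Fin N)) :
    Finset (Finset (Fin N) × Fin N) :=
  ((edges Fc) ×ˢ (Finset.univ : Finset (Fin N))).filter fun p =>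
    (∀ x ∈ p.1, x ∉ A) ∧ p.2 ∈ A ∧ insert p.2 p.1 ∈ Fc

/-- Euler characteristic χ(F_A) of the subcomplex spanned by A. -/
def chiSub (Fc : Finset (Finset (Fin N))) (A : Finset (Fin N)) : ℤ :=
  (A.card : ℤ) - (((edges Fc).filter (fun e => e ⊆ A)).card : ℤ)
    + ((Fc.filter (fun f => f ⊆ A)).card : ℤ)

/-- The lower bound −Σ_{(e,v)∈Lk(A)}(π − Λ(I_e)) + 2πχ(F_A) defining Y_A. -/
noncomputable def Ybound (Fc : Finset (Finset (Fin N))) (I : Finset (Fin N) → ℝ)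
    (A : Finset (Fin N)) : ℝ :=
  -(∑ p ∈ Lk Fc A, (π - Lam (I p.1))) + 2 * π * (chiSub Fc A : ℝ)

/-- x ∈ Y. -/
noncomputable def memY (Fc : Finset (Finset (Fin N))) (I : Finset (Fin N) → ℝ)
    (x : Fin N → ℝ) : Prop :=
  (∑ i, x i) = 2 * π * (chi Fc : ℝ) ∧
    ∀ A : Finset (Fin N), A.Nonempty → A ≠ Finset.univ → Ybound Fc I A < ∑ i ∈ A, x i

/-- x ∈ Ȳ. -/
noncomputable def memYbar (Fc : Finset (Finset (Fin N))) (I : Finset (Fin N) → ℝ)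
    (x : Fin N → ℝ) : Prop :=
  (∑ i, x i) = 2 * π * (chi Fc : ℝ) ∧
    ∀ A : Finset (Fin N), A.Nonempty → A ≠ Finset.univ → Ybound Fc I A ≤ ∑ i ∈ A, x i


/-! ### The quadratic form of a triangle -/

/-- The quadratic form `Q` with `16 · Area² = 4 (r₁ r₂ r₃)² Q(1/r₁, 1/r₂, 1/r₃)`, for the triangle
whose vertices `1, 2, 3` have inversive distances `a = I₁₂`, `b = I₁₃`, `c = I₂₃`. -/
def triQ (a b c k₁ k₂ k₃ : ℝ) : ℝ :=
  (1 - c ^ 2) * k₁ ^ 2 + (1 - b ^ 2) * k₂ ^ 2 + (1 - a ^ 2) * k₃ ^ 2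
    + 2 * (a + b * c) * (k₁ * k₂) + 2 * (b + a * c) * (k₁ * k₃) + 2 * (c + a * b) * (k₂ * k₃)

/-- The symmetric bilinear form polar to `triQ`. -/
def triB (a b c x₁ x₂ x₃ y₁ y₂ y₃ : ℝ) : ℝ :=
  (1 - c ^ 2) * (x₁ * y₁) + (1 - b ^ 2) * (x₂ * y₂) + (1 - a ^ 2) * (x₃ * y₃)
    + (a + b * c) * (x₁ * y₂ + x₂ * y₁) + (b + a * c) * (x₁ * y₃ + x₃ * y₁)
    + (c + a * b) * (x₂ * y₃ + x₃ * y₂)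

/-- With `p = 1/r₁` and `q = 1/r₂`, the squared length of the side `12` is
`(r₁ r₂)² * sqSide I₁₂ p q`. -/
def sqSide (a p q : ℝ) : ℝ := p ^ 2 + q ^ 2 + 2 * a * (p * q)

/-- Cosine of the angle at vertex `1`, as a function of the reciprocal radii; `a = I₁₂`, `b = I₁₃`,
`c = I₂₃`. -/
noncomputable def triCos (a b c k₁ k₂ k₃ : ℝ) : ℝ :=
  (k₂ * k₃ + a * (k₁ * k₃) + b * (k₁ * k₂) - c * k₁ ^ 2) / (√(sqSide a k₁ k₂) * √(sqSide b k₁ k₃))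

/-- The angle at vertex `1`, as a function of the reciprocal radii. -/
noncomputable def triAng (a b c k₁ k₂ k₃ : ℝ) : ℝ := arccos (triCos a b c k₁ k₂ k₃)

lemma sqSide_pos {a p q : ℝ} (ha : 0 ≤ a) (hp : 0 < p) (hq : 0 < q) : 0 < sqSide a p q := by
  unfold sqSide; positivity

/-- Two points of the positive octant at which `triQ` is positive lie in the same nappe of the
Lorentzian cone `triQ > 0`; here `a > 1` makes the signature Lorentzian. -/
lemma triB_nonneg_of_one_lt {a b c x₁ x₂ x₃ y₁ y₂ y₃ : ℝ} (ha : 1 < a) (hb : 0 ≤ b) (hc : 0 ≤ c)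
    (hx₁ : 0 < x₁) (hx₂ : 0 < x₂) (hy₁ : 0 < y₁) (hy₂ : 0 < y₂)
    (hx : 0 < triQ a b c x₁ x₂ x₃) (hy : 0 < triQ a b c y₁ y₂ y₃) :
    0 ≤ triB a b c x₁ x₂ x₃ y₁ y₂ y₃ := by
  have hm : 0 < a ^ 2 - 1 := by nlinarith
  have hD : 0 < a ^ 2 + b ^ 2 + c ^ 2 + 2 * a * b * c - 1 := by
    have : 0 ≤ a * b * c := by positivity
    nlinarith [sq_nonneg b, sq_nonneg c]
  obtain ⟨m, hmdef⟩ : ∃ t, t = a ^ 2 - 1 := ⟨_, rfl⟩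
  obtain ⟨D, hDdef⟩ : ∃ t, t = a ^ 2 + b ^ 2 + c ^ 2 + 2 * a * b * c - 1 := ⟨_, rfl⟩
  obtain ⟨Lx, hLx⟩ : ∃ t, t = (b + a * c) * x₁ + (c + a * b) * x₂ - m * x₃ := ⟨_, rfl⟩
  obtain ⟨Ly, hLy⟩ : ∃ t, t = (b + a * c) * y₁ + (c + a * b) * y₂ - m * y₃ := ⟨_, rfl⟩
  obtain ⟨q, hq⟩ : ∃ t, t = x₁ * y₁ + x₂ * y₂ + a * (x₁ * y₂ + x₂ * y₁) := ⟨_, rfl⟩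
  -- Completing the square in the third variable, whose coefficient is `-m`.
  have ex : m * triQ a b c x₁ x₂ x₃ = D * sqSide a x₁ x₂ - Lx ^ 2 := by
    simp only [triQ, sqSide, hLx, hmdef, hDdef]; ring
  have ey : m * triQ a b c y₁ y₂ y₃ = D * sqSide a y₁ y₂ - Ly ^ 2 := by
    simp only [triQ, sqSide, hLy, hmdef, hDdef]; ring
  have exy : m * triB a b c x₁ x₂ x₃ y₁ y₂ y₃ = D * q - Lx * Ly := by
    simp only [triB, hLx, hLy, hmdef, hDdef, hq]; ring
  rw [← hmdef] at hm
  rw [← hDdef] at hD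
  have h1 : Lx ^ 2 ≤ D * sqSide a x₁ x₂ := by nlinarith [mul_pos hm hx]
  have h2 : Ly ^ 2 ≤ D * sqSide a y₁ y₂ := by nlinarith [mul_pos hm hy]
  have hq0 : 0 ≤ q := by rw [hq]; positivity
  -- Reverse Cauchy–Schwarz for `sqSide a`, which is Lorentzian on the plane since `a > 1`.
  have hqq : sqSide a x₁ x₂ * sqSide a y₁ y₂ ≤ q ^ 2 := by
    have : q ^ 2 - sqSide a x₁ x₂ * sqSide a y₁ y₂ = m * (x₁ * y₂ - x₂ * y₁) ^ 2 := by
      simp only [sqSide, hq, hmdef]; ring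
    nlinarith [mul_nonneg hm.le (sq_nonneg (x₁ * y₂ - x₂ * y₁))]
  have h3 : (Lx * Ly) ^ 2 ≤ (D * q) ^ 2 := by
    calc (Lx * Ly) ^ 2 = Lx ^ 2 * Ly ^ 2 := by ring
      _ ≤ (D * sqSide a x₁ x₂) * (D * sqSide a y₁ y₂) :=
        mul_le_mul h1 h2 (sq_nonneg _) ((sq_nonneg _).trans h1)
      _ = D ^ 2 * (sqSide a x₁ x₂ * sqSide a y₁ y₂) := by ring
      _ ≤ D ^ 2 * q ^ 2 := by gcongr
      _ = (D * q) ^ 2 := by ring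
  have h4 : Lx * Ly ≤ D * q := le_of_sq_le_sq h3 (by positivity)
  exact nonneg_of_mul_nonneg_right (by rw [exy]; linarith) hm

lemma triB_nonneg {a b c x₁ x₂ x₃ y₁ y₂ y₃ : ℝ} (ha : 0 ≤ a) (hb : 0 ≤ b) (hc : 0 ≤ c)
    (hx₁ : 0 < x₁) (hx₂ : 0 < x₂) (hx₃ : 0 < x₃) (hy₁ : 0 < y₁) (hy₂ : 0 < y₂) (hy₃ : 0 < y₃)
    (hx : 0 < triQ a b c x₁ x₂ x₃) (hy : 0 < triQ a b c y₁ y₂ y₃) :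
    0 ≤ triB a b c x₁ x₂ x₃ y₁ y₂ y₃ := by
  rcases lt_or_ge 1 a with h | h
  · exact triB_nonneg_of_one_lt h hb hc hx₁ hx₂ hy₁ hy₂ hx hy
  rcases lt_or_ge 1 b with h' | h'
  · have e : triB a b c x₁ x₂ x₃ y₁ y₂ y₃ = triB b a c x₁ x₃ x₂ y₁ y₃ y₂ := by
      unfold triB; ring
    rw [e]
    refine triB_nonneg_of_one_lt h' ha hc hx₁ hx₃ hy₁ hy₃ ?_ ?_
    · convert hx using 1; unfold triQ; ring
    · convert hy using 1; unfold triQ; ring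
  rcases lt_or_ge 1 c with h'' | h''
  · have e : triB a b c x₁ x₂ x₃ y₁ y₂ y₃ = triB c b a x₃ x₂ x₁ y₃ y₂ y₁ := by
      unfold triB; ring
    rw [e]
    refine triB_nonneg_of_one_lt h'' hb ha hx₃ hx₂ hy₃ hy₂ ?_ ?_
    · convert hx using 1; unfold triQ; ring
    · convert hy using 1; unfold triQ; ring
  · have h1 : 0 ≤ 1 - a ^ 2 := by nlinarith
    have h2 : 0 ≤ 1 - b ^ 2 := by nlinarith
    have h3 : 0 ≤ 1 - c ^ 2 := by nlinarith
    unfold triB; positivity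

/-- The positive reciprocal radii at which `triQ` is positive, an open convex set on which the three
angles are smooth. -/
def triDom (a b c : ℝ) : Set (Fin 3 → ℝ) :=
  {k | 0 < k 0 ∧ 0 < k 1 ∧ 0 < k 2 ∧ 0 < triQ a b c (k 0) (k 1) (k 2)}

lemma convex_triDom {a b c : ℝ} (ha : 0 ≤ a) (hb : 0 ≤ b) (hc : 0 ≤ c) :
    Convex ℝ (triDom a b c) := by
  rintro x ⟨hx0, hx1, hx2, hx⟩ y ⟨hy0, hy1, hy2, hy⟩ s t hs ht hst
  have hB := triB_nonneg ha hb hc hx0 hx1 hx2 hy0 hy1 hy2 hx hy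
  have key : ∀ p q : ℝ, 0 < p → 0 < q → 0 < s * p + t * q := by
    intro p q hp hq
    rcases hs.eq_or_lt with rfl | hs'
    · have : t = 1 := by linarith
      subst this; simpa using hq
    · positivity
  refine ⟨by simpa using key _ _ hx0 hy0, by simpa using key _ _ hx1 hy1,
    by simpa using key _ _ hx2 hy2, ?_⟩
  have e : triQ a b c ((s • x + t • y) 0) ((s • x + t • y) 1) ((s • x + t • y) 2)
      = s * (s * triQ a b c (x 0) (x 1) (x 2)) + t * (t * triQ a b c (y 0) (y 1) (y 2))
        + 2 * (s * t) * triB a b c (x 0) (x 1) (x 2) (y 0) (y 1) (y 2) := by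
    simp only [triQ, triB, Pi.add_apply, Pi.smul_apply, smul_eq_mul]; ring
  rw [e]
  have : 0 < s * (s * triQ a b c (x 0) (x 1) (x 2)) + t * (t * triQ a b c (y 0) (y 1) (y 2)) := by
    rcases hs.eq_or_lt with rfl | hs'
    · have : t = 1 := by linarith
      subst this; simpa using hy
    · positivity
  positivity

lemma isOpen_triDom (a b c : ℝ) : IsOpen (triDom a b c) := by
  simp only [triDom, triQ, Set.ofPred_and]
  refine (isOpen_lt ?_ ?_).inter ((isOpen_lt ?_ ?_).inter ((isOpen_lt ?_ ?_).inter
    (isOpen_lt ?_ ?_))) <;> fun_prop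

/-! ### Angles and closedness of the angle form -/

lemma one_sub_triCos_sq {a b c k₁ k₂ k₃ : ℝ} (ha : 0 ≤ a) (hb : 0 ≤ b)
    (h₁ : 0 < k₁) (h₂ : 0 < k₂) (h₃ : 0 < k₃) :
    1 - triCos a b c k₁ k₂ k₃ ^ 2
      = k₁ ^ 2 * triQ a b c k₁ k₂ k₃ / (sqSide a k₁ k₂ * sqSide b k₁ k₃) := by
  have hX := sqSide_pos ha h₁ h₂
  have hY := sqSide_pos hb h₁ h₃
  rw [triCos, div_pow, mul_pow, Real.sq_sqrt hX.le, Real.sq_sqrt hY.le]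
  field_simp
  unfold sqSide triQ; ring

lemma triCos_ne {a b c k₁ k₂ k₃ : ℝ} (ha : 0 ≤ a) (hb : 0 ≤ b)
    (h₁ : 0 < k₁) (h₂ : 0 < k₂) (h₃ : 0 < k₃) (hQ : 0 < triQ a b c k₁ k₂ k₃) :
    triCos a b c k₁ k₂ k₃ ≠ -1 ∧ triCos a b c k₁ k₂ k₃ ≠ 1 := by
  have hX := sqSide_pos ha h₁ h₂
  have hY := sqSide_pos hb h₁ h₃
  have : 0 < 1 - triCos a b c k₁ k₂ k₃ ^ 2 := by
    rw [one_sub_triCos_sq ha hb h₁ h₂ h₃]; positivity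
  constructor <;> intro h <;> rw [h] at this <;> norm_num at this

/-- Derivative of the angle at vertex `1` in the reciprocal radius of vertex `2`.  Apart from the
factor `k₁` the expression is invariant under exchanging the vertices `1` and `2`. -/
lemma hasDerivAt_triAng {a b c k₁ k₂ k₃ : ℝ} (ha : 0 ≤ a) (hb : 0 ≤ b)
    (h₁ : 0 < k₁) (h₂ : 0 < k₂) (h₃ : 0 < k₃) (hQ : 0 < triQ a b c k₁ k₂ k₃) :
    HasDerivAt (fun s => triAng a b c k₁ s k₃)
      (-(k₁ * ((1 - a ^ 2) * k₃ + (b + a * c) * k₁ + (c + a * b) * k₂)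
        / (sqSide a k₁ k₂ * √(triQ a b c k₁ k₂ k₃)))) k₂ := by
  have hX := sqSide_pos ha h₁ h₂
  have hY := sqSide_pos hb h₁ h₃
  obtain ⟨hn1, hn2⟩ := triCos_ne ha hb h₁ h₂ h₃ hQ
  have hN : HasDerivAt (fun s => s * k₃ + a * (k₁ * k₃) + b * (k₁ * s) - c * k₁ ^ 2)
      (k₃ + b * k₁) k₂ := by
    have := ((((hasDerivAt_id k₂).mul_const k₃).add_const (a * (k₁ * k₃))).add
      (((hasDerivAt_id k₂).const_mul k₁).const_mul b)).sub_const (c * k₁ ^ 2)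
    simpa using this
  have hXd : HasDerivAt (fun s => sqSide a k₁ s) (2 * (k₂ + a * k₁)) k₂ := by
    have := (((hasDerivAt_id k₂).pow 2).const_add (k₁ ^ 2)).add
      (((hasDerivAt_id k₂).const_mul k₁).const_mul (2 * a))
    unfold sqSide
    refine this.congr_deriv ?_
    simp; ring
  have hC := hN.div ((hXd.sqrt hX.ne').mul_const (√(sqSide b k₁ k₃))) (by positivity)
  have hA := (hasDerivAt_arccos hn1 hn2).comp k₂ hC
  refine hA.congr_deriv ?_
  rw [one_sub_triCos_sq ha hb h₁ h₂ h₃, Real.sqrt_div (by positivity), Real.sqrt_mul (by positivity),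
    Real.sqrt_sq h₁.le, Real.sqrt_mul hX.le]
  have sX := Real.sq_sqrt hX.le
  have pX := Real.sqrt_pos.2 hX
  have pY := Real.sqrt_pos.2 hY
  have pQ := Real.sqrt_pos.2 hQ
  set X := √(sqSide a k₁ k₂)
  rw [← sX]
  field_simp
  rw [sX]
  unfold sqSide; ring

lemma triAng_swap (a b c k₁ k₂ k₃ : ℝ) : triAng a b c k₁ k₂ k₃ = triAng b a c k₁ k₃ k₂ := by
  unfold triAng triCos
  congr 1
  rw [mul_comm √(sqSide a k₁ k₂)]
  congr 1; ring

lemma triQ_swap₁₂ (a b c k₁ k₂ k₃ : ℝ) : triQ a b c k₁ k₂ k₃ = triQ a c b k₂ k₁ k₃ := by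
  unfold triQ; ring

lemma triQ_swap₂₃ (a b c k₁ k₂ k₃ : ℝ) : triQ a b c k₁ k₂ k₃ = triQ b a c k₁ k₃ k₂ := by
  unfold triQ; ring

/-- Closedness of the angle form: `∂(θ₁ / k₁) / ∂k₂ = ∂(θ₂ / k₂) / ∂k₁`. -/
lemma triAng_cross {a b c k₁ k₂ k₃ : ℝ} (ha : 0 ≤ a) (hb : 0 ≤ b) (hc : 0 ≤ c)
    (h₁ : 0 < k₁) (h₂ : 0 < k₂) (h₃ : 0 < k₃) (hQ : 0 < triQ a b c k₁ k₂ k₃) :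
    ∃ d, HasDerivAt (fun s => -(triAng a b c k₁ s k₃ / k₁)) d k₂ ∧
      HasDerivAt (fun s => -(triAng a c b k₂ s k₃ / k₂)) d k₁ := by
  refine ⟨_, ((hasDerivAt_triAng ha hb h₁ h₂ h₃ hQ).div_const k₁).neg, ?_⟩
  rw [triQ_swap₁₂] at hQ
  refine ((hasDerivAt_triAng ha hc h₂ h₁ h₃ hQ).div_const k₂).neg.congr_deriv ?_
  rw [triQ_swap₁₂ a b c]
  have hX := sqSide_pos ha h₁ h₂
  have e : sqSide a k₂ k₁ = sqSide a k₁ k₂ := by unfold sqSide; ring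
  rw [e]
  have pQ := Real.sqrt_pos.2 hQ
  field_simp
  ring

/-! ### Primitives of the angle form -/

/-- The Poincaré lemma for smooth 1-forms on a convex open set, with the form given by its
coordinates `g i` and closedness by equality of the cross partial derivatives. -/
lemma exists_potential {n : ℕ} {U : Set (Fin n → ℝ)} (hU : Convex ℝ U) (hUo : IsOpen U)
    (g : Fin n → (Fin n → ℝ) → ℝ) (hg : ∀ i, ∀ x ∈ U, ContDiffAt ℝ (⊤ : ℕ∞) (g i) x)
    (hsym : ∀ x ∈ U, ∀ i j, fderiv ℝ (g i) x (Pi.single j 1) = fderiv ℝ (g j) x (Pi.single i 1)) :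
    ∃ f : (Fin n → ℝ) → ℝ, (∀ x ∈ U, ContDiffAt ℝ (⊤ : ℕ∞) f x) ∧
      ∀ x ∈ U, HasFDerivAt f
        (∑ i, g i x • (ContinuousLinearMap.proj i : (Fin n → ℝ) →L[ℝ] ℝ)) x := by
  set ω : (Fin n → ℝ) → (Fin n → ℝ) →L[ℝ] ℝ :=
    fun x => ∑ i, g i x • (ContinuousLinearMap.proj i : (Fin n → ℝ) →L[ℝ] ℝ) with hω
  have hωs : ∀ x ∈ U, ContDiffAt ℝ (⊤ : ℕ∞) ω x := fun x hx =>
    ContDiffAt.sum fun i _ => (hg i x hx).smul contDiffAt_const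
  have hgd : ∀ i, ∀ x ∈ U, DifferentiableAt ℝ (g i) x := fun i x hx =>
    (hg i x hx).differentiableAt (by simp)
  have hfd : ∀ x ∈ U, ∀ v w, fderiv ℝ ω x v w
      = ∑ i, ∑ j, v j * w i * fderiv ℝ (g i) x (Pi.single j 1) := by
    intro x hx v w
    have : HasFDerivAt ω (∑ i, (fderiv ℝ (g i) x).smulRight
        (ContinuousLinearMap.proj i : (Fin n → ℝ) →L[ℝ] ℝ)) x :=
      HasFDerivAt.fun_sum fun i _ => (hgd i x hx).hasFDerivAt.smul_const
          (ContinuousLinearMap.proj i : (Fin n → ℝ) →L[ℝ] ℝ)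
    rw [this.fderiv]
    simp only [sum_apply, ContinuousLinearMap.smulRight_apply,
      smul_apply, ContinuousLinearMap.proj_apply, smul_eq_mul]
    refine Finset.sum_congr rfl fun i _ => ?_
    conv_lhs => rw [pi_eq_sum_univ' v, map_sum]
    rw [Finset.sum_mul]
    refine Finset.sum_congr rfl fun j _ => ?_
    rw [map_smul, smul_eq_mul]; ring
  obtain ⟨f, hf⟩ := hU.exists_forall_hasFDerivAt_of_fderiv_symmetric hUo
    (fun x hx => ((hωs x hx).differentiableAt (by simp)).differentiableWithinAt) (by
      intro x hx v w
      rw [hfd x hx, hfd x hx, Finset.sum_comm]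
      refine Finset.sum_congr rfl fun i _ => Finset.sum_congr rfl fun j _ => ?_
      rw [hsym x hx i j]; ring)
  refine ⟨f, fun x hx => ?_, hf⟩
  refine ContDiffOn.contDiffAt ?_ (hUo.mem_nhds hx)
  rw [contDiffOn_infty_iff_fderiv_of_isOpen hUo]
  refine ⟨fun x hx => (hf x hx).differentiableAt.differentiableWithinAt, ?_⟩
  exact ContDiffOn.congr (fun x hx => (hωs x hx).contDiffWithinAt) fun x hx => (hf x hx).fderiv


lemma contDiffAt_triAng {E : Type*} [NormedAddCommGroup E] [NormedSpace ℝ E] {a b c : ℝ}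
    {f₁ f₂ f₃ : E → ℝ} {x : E} (ha : 0 ≤ a) (hb : 0 ≤ b)
    (hf₁ : ContDiffAt ℝ (⊤ : ℕ∞) f₁ x) (hf₂ : ContDiffAt ℝ (⊤ : ℕ∞) f₂ x)
    (hf₃ : ContDiffAt ℝ (⊤ : ℕ∞) f₃ x) (h₁ : 0 < f₁ x) (h₂ : 0 < f₂ x) (h₃ : 0 < f₃ x)
    (hQ : 0 < triQ a b c (f₁ x) (f₂ x) (f₃ x)) :
    ContDiffAt ℝ (⊤ : ℕ∞) (fun y => triAng a b c (f₁ y) (f₂ y) (f₃ y)) x := by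
  obtain ⟨hn1, hn2⟩ := triCos_ne ha hb h₁ h₂ h₃ hQ
  have hX := sqSide_pos ha h₁ h₂
  have hY := sqSide_pos hb h₁ h₃
  have hXs : ContDiffAt ℝ (⊤ : ℕ∞) (fun y => sqSide a (f₁ y) (f₂ y)) x := by
    unfold sqSide; fun_prop
  have hYs : ContDiffAt ℝ (⊤ : ℕ∞) (fun y => sqSide b (f₁ y) (f₃ y)) x := by
    unfold sqSide; fun_prop
  refine (contDiffAt_arccos hn1 hn2).comp x (f := fun y => triCos a b c (f₁ y) (f₂ y) (f₃ y)) ?_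
  unfold triCos
  refine ContDiffAt.div (by fun_prop) ((hXs.sqrt hX.ne').mul (hYs.sqrt hY.ne')) ?_
  have := Real.sqrt_pos.2 hX
  have := Real.sqrt_pos.2 hY
  positivity

lemma fderiv_single_of_hasDerivAt_update {n : ℕ} {g : (Fin n → ℝ) → ℝ} {x : Fin n → ℝ} {j : Fin n}
    {d : ℝ} (hg : DifferentiableAt ℝ g x)
    (h : HasDerivAt (fun s => g (Function.update x j s)) d (x j)) :
    fderiv ℝ g x (Pi.single j 1) = d := by
  have h2 : HasFDerivAt g (fderiv ℝ g x) (Function.update x j (x j)) := by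
    rw [Function.update_eq_self]; exact hg.hasFDerivAt
  exact (h2.comp_hasDerivAt (x j) (hasDerivAt_update x j (x j))).unique h

/-- Coordinates of the 1-form `∑ θᵢ duᵢ = -∑ (θᵢ / kᵢ) dkᵢ` in the variables `kᵢ = exp (-uᵢ)`. -/
noncomputable def triCoeff (a b c : ℝ) : Fin 3 → (Fin 3 → ℝ) → ℝ :=
  ![fun k => -(triAng a b c (k 0) (k 1) (k 2) / k 0),
    fun k => -(triAng a c b (k 1) (k 0) (k 2) / k 1),
    fun k => -(triAng b c a (k 2) (k 0) (k 1) / k 2)]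

lemma contDiffAt_triCoeff {a b c : ℝ} (ha : 0 ≤ a) (hb : 0 ≤ b) (hc : 0 ≤ c) (i : Fin 3)
    {x : Fin 3 → ℝ} (hx : x ∈ triDom a b c) :
    ContDiffAt ℝ (⊤ : ℕ∞) (triCoeff a b c i) x := by
  obtain ⟨h0, h1, h2, hQ⟩ := hx
  have p : ∀ i : Fin 3, ContDiffAt ℝ (⊤ : ℕ∞) (fun k : Fin 3 → ℝ => k i) x := fun i => by fun_prop
  fin_cases i
  · exact ((contDiffAt_triAng ha hb (p 0) (p 1) (p 2) h0 h1 h2 hQ).div (p 0) h0.ne').neg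
  · refine ((contDiffAt_triAng ha hc (p 1) (p 0) (p 2) h1 h0 h2 ?_).div (p 1) h1.ne').neg
    rwa [← triQ_swap₁₂]
  · refine ((contDiffAt_triAng hb hc (p 2) (p 0) (p 1) h2 h0 h1 ?_).div (p 2) h2.ne').neg
    rwa [← triQ_swap₁₂, ← triQ_swap₂₃]

lemma triCoeff_symm {a b c : ℝ} (ha : 0 ≤ a) (hb : 0 ≤ b) (hc : 0 ≤ c)
    {x : Fin 3 → ℝ} (hx : x ∈ triDom a b c) (i j : Fin 3) :
    fderiv ℝ (triCoeff a b c i) x (Pi.single j 1)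
      = fderiv ℝ (triCoeff a b c j) x (Pi.single i 1) := by
  have hd : ∀ i, DifferentiableAt ℝ (triCoeff a b c i) x := fun i =>
    (contDiffAt_triCoeff ha hb hc i hx).differentiableAt (by simp)
  obtain ⟨h0, h1, h2, hQ⟩ := hx
  have h01 : fderiv ℝ (triCoeff a b c 0) x (Pi.single 1 1)
      = fderiv ℝ (triCoeff a b c 1) x (Pi.single 0 1) := by
    obtain ⟨d, hd1, hd2⟩ := triAng_cross ha hb hc h0 h1 h2 hQ
    rw [fderiv_single_of_hasDerivAt_update (hd 0) (d := d),
      fderiv_single_of_hasDerivAt_update (hd 1) (d := d)]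
    · simpa [triCoeff] using hd2
    · simpa [triCoeff] using hd1
  have h02 : fderiv ℝ (triCoeff a b c 0) x (Pi.single 2 1)
      = fderiv ℝ (triCoeff a b c 2) x (Pi.single 0 1) := by
    obtain ⟨d, hd1, hd2⟩ := triAng_cross hb ha hc h0 h2 h1 (by rwa [← triQ_swap₂₃])
    rw [fderiv_single_of_hasDerivAt_update (hd 0) (d := d),
      fderiv_single_of_hasDerivAt_update (hd 2) (d := d)]
    · simpa [triCoeff] using hd2
    · simpa [triCoeff, triAng_swap a b] using hd1
  have h12 : fderiv ℝ (triCoeff a b c 1) x (Pi.single 2 1)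
      = fderiv ℝ (triCoeff a b c 2) x (Pi.single 1 1) := by
    obtain ⟨d, hd1, hd2⟩ := triAng_cross hc ha hb h1 h2 h0
      (by rwa [← triQ_swap₂₃, ← triQ_swap₁₂])
    rw [fderiv_single_of_hasDerivAt_update (hd 1) (d := d),
      fderiv_single_of_hasDerivAt_update (hd 2) (d := d)]
    · simpa [triCoeff, triAng_swap b c] using hd2
    · simpa [triCoeff, triAng_swap a c] using hd1
  fin_cases i <;> fin_cases j
  exacts [rfl, h01, h02, h01.symm, rfl, h12, h02.symm, h12.symm, rfl]

/-- A smooth primitive of the angle form on `triDom`. -/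
lemma exists_triPotential {a b c : ℝ} (ha : 0 ≤ a) (hb : 0 ≤ b) (hc : 0 ≤ c) :
    ∃ G : (Fin 3 → ℝ) → ℝ, (∀ x ∈ triDom a b c, ContDiffAt ℝ (⊤ : ℕ∞) G x) ∧
      ∀ x ∈ triDom a b c, HasFDerivAt G
        (∑ i, triCoeff a b c i x • (ContinuousLinearMap.proj i : (Fin 3 → ℝ) →L[ℝ] ℝ)) x :=
  exists_potential (convex_triDom ha hb hc) (isOpen_triDom a b c) (triCoeff a b c)
    (fun i _ hx => contDiffAt_triCoeff ha hb hc i hx)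
    (fun _ hx i j => triCoeff_symm ha hb hc hx i j)

/-! ### Comparison with circle packing metrics -/

lemma len_eq {I : Finset (Fin N) → ℝ} {r : Fin N → ℝ} {i j : Fin N}
    (hi : 0 < r i) (hj : 0 < r j) :
    len I r i j = r i * r j * √(sqSide (I {i, j}) (r i)⁻¹ (r j)⁻¹) := by
  have h : r i ^ 2 + r j ^ 2 + 2 * r i * r j * I {i, j}
      = (r i * r j) ^ 2 * sqSide (I {i, j}) (r i)⁻¹ (r j)⁻¹ := by
    unfold sqSide; field_simp; ring
  rw [len, h, Real.sqrt_mul (sq_nonneg _), Real.sqrt_sq (by positivity)]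

lemma len_comm (I : Finset (Fin N) → ℝ) (r : Fin N → ℝ) (i j : Fin N) :
    len I r i j = len I r j i := by
  unfold len
  rw [Finset.pair_comm]
  congr 1; ring

lemma len_sq {I : Finset (Fin N) → ℝ} {r : Fin N → ℝ} {i j : Fin N}
    (hi : 0 < r i) (hj : 0 < r j) (h : 0 ≤ I {i, j}) :
    len I r i j ^ 2 = r i ^ 2 + r j ^ 2 + 2 * r i * r j * I {i, j} :=
  Real.sq_sqrt (by positivity)

lemma len_pos {I : Finset (Fin N) → ℝ} {r : Fin N → ℝ} {i j : Fin N}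
    (hi : 0 < r i) (hj : 0 < r j) (h : 0 ≤ I {i, j}) : 0 < len I r i j :=
  Real.sqrt_pos.2 (by positivity)

lemma cosAng_eq {I : Finset (Fin N) → ℝ} {r : Fin N → ℝ} {i j k : Fin N}
    (hi : 0 < r i) (hj : 0 < r j) (hk : 0 < r k)
    (ha : 0 ≤ I {i, j}) (hb : 0 ≤ I {i, k}) (hc : 0 ≤ I {j, k}) :
    cosAng I r i j k
      = triCos (I {i, j}) (I {i, k}) (I {j, k}) (r i)⁻¹ (r j)⁻¹ (r k)⁻¹ := by
  have hX := Real.sqrt_pos.2 (sqSide_pos ha (inv_pos.2 hi) (inv_pos.2 hj))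
  have hY := Real.sqrt_pos.2 (sqSide_pos hb (inv_pos.2 hi) (inv_pos.2 hk))
  rw [cosAng, len_sq hi hj ha, len_sq hi hk hb, len_sq hj hk hc, len_eq hi hj, len_eq hi hk, triCos]
  field_simp
  ring

/-- Heron's formula turns the strict triangle inequalities into positivity of `triQ`. -/
lemma triQ_pos {I : Finset (Fin N) → ℝ} {r : Fin N → ℝ} {i j k : Fin N}
    (hi : 0 < r i) (hj : 0 < r j) (hk : 0 < r k)
    (ha : 0 ≤ I {i, j}) (hb : 0 ≤ I {i, k}) (hc : 0 ≤ I {j, k})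
    (h₁ : len I r j k < len I r i j + len I r i k)
    (h₂ : len I r i k < len I r i j + len I r j k)
    (h₃ : len I r i j < len I r i k + len I r j k) :
    0 < triQ (I {i, j}) (I {i, k}) (I {j, k}) (r i)⁻¹ (r j)⁻¹ (r k)⁻¹ := by
  have p₁ := len_pos hj hk hc
  have p₂ := len_pos hi hk hb
  have p₃ := len_pos hi hj ha
  have s₁ := len_sq hj hk hc
  have s₂ := len_sq hi hk hb
  have s₃ := len_sq hi hj ha
  -- Heron: the product of the perimeter and the three triangle excesses.
  have heron : 0 < 4 * (len I r i j ^ 2 * len I r i k ^ 2)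
      - (len I r i j ^ 2 + len I r i k ^ 2 - len I r j k ^ 2) ^ 2 := by
    have := mul_pos (mul_pos (add_pos (add_pos p₁ p₂) p₃) (sub_pos.2 h₁))
      (mul_pos (sub_pos.2 h₂) (sub_pos.2 h₃))
    linarith
  rw [s₁, s₂, s₃] at heron
  have e : triQ (I {i, j}) (I {i, k}) (I {j, k}) (r i)⁻¹ (r j)⁻¹ (r k)⁻¹
      = (4 * ((r i ^ 2 + r j ^ 2 + 2 * r i * r j * I {i, j})
          * (r i ^ 2 + r k ^ 2 + 2 * r i * r k * I {i, k}))
        - (r i ^ 2 + r j ^ 2 + 2 * r i * r j * I {i, j}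
          + (r i ^ 2 + r k ^ 2 + 2 * r i * r k * I {i, k})
          - (r j ^ 2 + r k ^ 2 + 2 * r j * r k * I {j, k})) ^ 2)
        / (4 * (r i * r j * r k) ^ 2) := by
    unfold triQ; field_simp; ring
  rw [e]
  positivity

lemma mem_edges_of_face {Fc : Finset (Finset (Fin N))} {f : Finset (Fin N)} (hf : f ∈ Fc)
    {i j : Fin N} (hi : i ∈ f) (hj : j ∈ f) (hij : i ≠ j) : ({i, j} : Finset (Fin N)) ∈ edges Fc := by
  unfold edges
  refine Finset.mem_biUnion.2 ⟨f, hf, Finset.mem_powersetCard.2 ⟨?_, Finset.card_pair hij⟩⟩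
  intro x hx
  rcases Finset.mem_insert.1 hx with rfl | hx
  · exact hi
  · rw [Finset.mem_singleton.1 hx]; exact hj

/-- The primitive of `θᵢ duᵢ + θⱼ duⱼ + θₖ duₖ` for a face, as a function of all coordinates `u`. -/
lemma exists_facePotential (Fc : Finset (Finset (Fin N))) (hT : IsTriangulation Fc)
    (I : Finset (Fin N) → ℝ) (hI : ∀ e ∈ edges Fc, 0 ≤ I e) {i j k : Fin N}
    (hf : ({i, j, k} : Finset (Fin N)) ∈ Fc) :
    ∃ H : (Fin N → ℝ) → ℝ, ∀ u ∈ lnOmega Fc I, ContDiffAt ℝ (⊤ : ℕ∞) H u ∧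
      HasFDerivAt H
        (arccos (cosAng I (rOf u) i j k) • (ContinuousLinearMap.proj i : (Fin N → ℝ) →L[ℝ] ℝ)
        + arccos (cosAng I (rOf u) j i k) • (ContinuousLinearMap.proj j : (Fin N → ℝ) →L[ℝ] ℝ)
        + arccos (cosAng I (rOf u) k i j) • (ContinuousLinearMap.proj k : (Fin N → ℝ) →L[ℝ] ℝ))
        u := by
  have h3 := hT.card3 _ hf
  have hij : i ≠ j := by
    rintro rfl
    rw [Finset.insert_eq_of_mem (by simp)] at h3
    exact absurd h3 (by have := Finset.card_le_two (a := i) (b := k); omega)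
  have hik : i ≠ k := by
    rintro rfl
    rw [Finset.insert_eq_of_mem (by simp)] at h3
    exact absurd h3 (by have := Finset.card_le_two (a := j) (b := i); omega)
  have hjk : j ≠ k := by
    rintro rfl
    rw [Finset.pair_eq_singleton] at h3
    exact absurd h3 (by have := Finset.card_le_two (a := i) (b := j); omega)
  have ha : 0 ≤ I {i, j} := hI _ (mem_edges_of_face hf (by simp) (by simp) hij)
  have hb : 0 ≤ I {i, k} := hI _ (mem_edges_of_face hf (by simp) (by simp) hik)
  have hc : 0 ≤ I {j, k} := hI _ (mem_edges_of_face hf (by simp) (by simp) hjk)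
  obtain ⟨G, hGs, hGd⟩ := exists_triPotential ha hb hc
  set κ : (Fin N → ℝ) → Fin 3 → ℝ := fun u => ![rexp (-u i), rexp (-u j), rexp (-u k)] with hκ
  refine ⟨fun u => G (κ u), fun u hu => ?_⟩
  have hinv : ∀ m, rexp (-u m) = (rOf u m)⁻¹ := fun m => Real.exp_neg _
  have hr : ∀ m, 0 < rOf u m := fun m => Real.exp_pos _
  have hj' : ({j, i, k} : Finset (Fin N)) ∈ Fc := by rwa [Finset.insert_comm]
  have hk' : ({k, i, j} : Finset (Fin N)) ∈ Fc := by
    rwa [Finset.insert_comm, Finset.pair_comm k j]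
  have hmem : κ u ∈ triDom (I {i, j}) (I {i, k}) (I {j, k}) := by
    refine ⟨Real.exp_pos _, Real.exp_pos _, Real.exp_pos _, ?_⟩
    simp only [hκ, hinv, Matrix.cons_val]
    refine triQ_pos (hr i) (hr j) (hr k) ha hb hc (hu.2 i j k hf) ?_ ?_
    · simpa only [len_comm I _ j i] using hu.2 j i k hj'
    · simpa only [len_comm I _ k i, len_comm I _ k j] using hu.2 k i j hk'
  have hκs : ContDiffAt ℝ (⊤ : ℕ∞) κ u := by
    rw [contDiffAt_pi]
    intro l
    fin_cases l <;> simp [hκ] <;> fun_prop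
  have hexp : ∀ m : Fin N, HasFDerivAt (fun v : Fin N → ℝ => rexp (-v m))
      (-rexp (-u m) • (ContinuousLinearMap.proj m : (Fin N → ℝ) →L[ℝ] ℝ)) u := by
    intro m
    refine ((hasFDerivAt_apply m u).neg.exp).congr_fderiv ?_
    ext v; simp
  have hκd : HasFDerivAt κ (ContinuousLinearMap.pi
      ![-rexp (-u i) • (ContinuousLinearMap.proj i : (Fin N → ℝ) →L[ℝ] ℝ),
        -rexp (-u j) • (ContinuousLinearMap.proj j : (Fin N → ℝ) →L[ℝ] ℝ),
        -rexp (-u k) • (ContinuousLinearMap.proj k : (Fin N → ℝ) →L[ℝ] ℝ)]) u := by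
    rw [hasFDerivAt_pi']
    intro l
    fin_cases l
    · exact hexp i
    · exact hexp j
    · exact hexp k
  refine ⟨(hGs _ hmem).comp u hκs, ((hGd _ hmem).comp u hκd).congr_fderiv ?_⟩
  rw [cosAng_eq (hr i) (hr j) (hr k) ha hb hc,
    cosAng_eq (hr j) (hr i) (hr k) (by rwa [Finset.pair_comm]) hc hb,
    cosAng_eq (hr k) (hr i) (hr j) (by rwa [Finset.pair_comm]) (by rwa [Finset.pair_comm]) ha,
    Finset.pair_comm j i, Finset.pair_comm k i, Finset.pair_comm k j]
  simp only [← hinv]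
  have e : ∀ A m v : ℝ, A / rexp m * (rexp m * v) = A * v := by
    intro A m v
    have := (Real.exp_pos m).ne'
    field_simp
  ext v
  simp [Fin.sum_univ_three, triCoeff, hκ, triAng, e]

/-! ### The full potential -/

/-- A potential for `C r_i^α / ‖r‖_α^α`. -/
lemma exists_normPotential [NeZero N] (C α : ℝ) :
    ∃ S : (Fin N → ℝ) → ℝ, ContDiff ℝ (⊤ : ℕ∞) S ∧ ∀ u i,
      HasDerivAt (fun s => S (Function.update u i s))
        (C / (∑ j, rOf u j ^ α) * rOf u i ^ α) (u i) := by
  have hpow : ∀ (u : Fin N → ℝ) j, rOf u j ^ α = rexp (u j * α) := fun u j => (Real.exp_mul _ _).symm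
  have hsum : ∀ u : Fin N → ℝ, 0 < ∑ j, rexp (u j * α) := fun u =>
    Finset.sum_pos (fun _ _ => Real.exp_pos _) Finset.univ_nonempty
  have hu : ∀ (u : Fin N → ℝ) i, HasDerivAt (fun s => Function.update u i s)
      (Pi.single i (1 : ℝ)) (u i) := fun u i => hasDerivAt_update u i (u i)
  simp only [hpow]
  rcases eq_or_ne α 0 with rfl | hα
  · refine ⟨fun u => C / N * ∑ j, u j, by fun_prop, fun u i => ?_⟩
    have h1 := HasDerivAt.fun_sum (u := Finset.univ) fun j _ => hasDerivAt_pi.1 (hu u i) j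
    refine (h1.const_mul (C / N)).congr_deriv ?_
    simp
  · refine ⟨fun u => C / α * Real.log (∑ j, rexp (u j * α)), ?_, fun u i => ?_⟩
    · exact contDiff_const.mul (ContDiff.log (by fun_prop) fun u => (hsum u).ne')
    · have h1 := HasDerivAt.fun_sum (u := Finset.univ) fun j _ =>
        ((hasDerivAt_pi.1 (hu u i) j).mul_const α).exp
      refine ((h1.log (by simpa using (hsum u).ne')).const_mul (C / α)).congr_deriv ?_
      have := (hsum u).ne'
      simp [Pi.single_apply]
      field_simp

/-- there is a C^∞ potential F on ln Ω with ∂F/∂u_i = K_i − s_α r_i^α,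
so the α-flow is the negative gradient flow of F. -/
theorem stmt1 {N : ℕ} (Fc : Finset (Finset (Fin N))) (hT : IsTriangulation Fc)
    (I : Finset (Fin N) → ℝ) (hI : ∀ e ∈ edges Fc, 0 ≤ I e) (α : ℝ) :
    ∃ F : (Fin N → ℝ) → ℝ,
      ContDiffOn ℝ (⊤ : ℕ∞) F (lnOmega Fc I) ∧
      ∀ u ∈ lnOmega Fc I, ∀ i : Fin N,
        HasDerivAt (fun s : ℝ => F (Function.update u i s))
          (K Fc I (rOf u) i - sA Fc α (rOf u) * rOf u i ^ α) (u i) := by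
  have : Nonempty (Fin N) := hT.conn.nonempty
  have : NeZero N := ⟨(Fin.pos_iff_nonempty.2 this).ne'⟩
  obtain ⟨S, hS, hSd⟩ := exists_normPotential (N := N) (2 * π * (chi Fc : ℝ)) α
  set T : (Fin N → ℝ) → Fin N → Fin N → Fin N → ℝ := fun u i j k =>
    if ({i, j, k} : Finset (Fin N)) ∈ Fc then arccos (cosAng I (rOf u) i j k) else 0 with hTdef
  have hH : ∀ i j k : Fin N, ∃ H : (Fin N → ℝ) → ℝ, ∀ u ∈ lnOmega Fc I,
      ContDiffAt ℝ (⊤ : ℕ∞) H u ∧ HasFDerivAt H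
        (T u i j k • (ContinuousLinearMap.proj i : (Fin N → ℝ) →L[ℝ] ℝ)
        + T u j i k • (ContinuousLinearMap.proj j : (Fin N → ℝ) →L[ℝ] ℝ)
        + T u k i j • (ContinuousLinearMap.proj k : (Fin N → ℝ) →L[ℝ] ℝ)) u := by
    intro i j k
    have e1 : ({j, i, k} : Finset (Fin N)) = {i, j, k} := Finset.insert_comm _ _ _
    have e2 : ({k, i, j} : Finset (Fin N)) = {i, j, k} := by
      rw [Finset.insert_comm, Finset.pair_comm k j]
    by_cases hf : ({i, j, k} : Finset (Fin N)) ∈ Fc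
    · obtain ⟨H, hH⟩ := exists_facePotential Fc hT I hI hf
      refine ⟨H, fun u hu => ?_⟩
      simpa only [hTdef, e1, e2, if_pos hf] using hH u hu
    · refine ⟨fun _ => 0, fun u _ => ⟨contDiffAt_const, ?_⟩⟩
      simp only [hTdef, e1, e2, if_neg hf, zero_smul, add_zero]
      exact hasFDerivAt_const _ _
  choose H hH using hH
  -- The functions attached to the `6` orderings of a face all have the same differential.
  refine ⟨fun u => 2 * π * ∑ i, u i - 1 / 6 * ∑ i, ∑ j, ∑ k, H i j k u - S u,
    fun u hu => ContDiffAt.contDiffWithinAt ?_, fun u hu m => ?_⟩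
  · have h1 : ContDiffAt ℝ (⊤ : ℕ∞) (fun u => ∑ i, ∑ j, ∑ k, H i j k u) u :=
      ContDiffAt.sum fun i _ => ContDiffAt.sum fun j _ => ContDiffAt.sum fun k _ =>
        (hH i j k u hu).1
    have h2 := hS.contDiffAt (x := u)
    fun_prop
  · have hup := hasDerivAt_update u m (u m)
    have hc : ∀ i j k, HasDerivAt (fun s => H i j k (Function.update u m s))
        (T u i j k * (Pi.single m (1 : ℝ) : Fin N → ℝ) i
          + T u j i k * (Pi.single m (1 : ℝ) : Fin N → ℝ) j
          + T u k i j * (Pi.single m (1 : ℝ) : Fin N → ℝ) k) (u m) := by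
      intro i j k
      have h := (hH i j k u hu).2
      rw [← Function.update_eq_self m u] at h
      have := h.comp_hasDerivAt (u m) hup
      exact this.congr_deriv (by simp)
    have h1 : HasDerivAt (fun s => ∑ i, ∑ j, ∑ k, H i j k (Function.update u m s)) _ (u m) :=
      HasDerivAt.fun_sum fun i _ => HasDerivAt.fun_sum fun j _ => HasDerivAt.fun_sum fun k _ =>
        hc i j k
    have h2 := HasDerivAt.fun_sum (u := Finset.univ) fun j _ => hasDerivAt_pi.1 hup j
    refine (((h2.const_mul (2 * π)).sub (h1.const_mul (1 / 6))).sub (hSd u m)).congr_deriv ?_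
    have s1 : ∑ i, ∑ j, ∑ k, T u i j k * (Pi.single m (1 : ℝ) : Fin N → ℝ) i
        = ∑ j, ∑ k, T u m j k := by
      simp [Pi.single_apply]
    have s2 : ∑ i, ∑ j, ∑ k, T u j i k * (Pi.single m (1 : ℝ) : Fin N → ℝ) j
        = ∑ j, ∑ k, T u m j k := by
      rw [Finset.sum_comm, s1]
    have s3 : ∑ i, ∑ j, ∑ k, T u k i j * (Pi.single m (1 : ℝ) : Fin N → ℝ) k
        = ∑ j, ∑ k, T u m j k := by
      simp [Pi.single_apply]
    simp only [Finset.sum_add_distrib, s1, s2, s3]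
    simp only [K, sA, hTdef, Finset.sum_pi_single', Finset.mem_univ, if_true]
    ring

end IDCP
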